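/- Let f : (0,1] → ℝ be a function such that t ↦ t^{1/2} f(t) belongs to L_q²[0,1], i.e., Σ_{n=0}^{∞} q^n · q^n |f(q^n)|² < ∞. Then the basic Fourier–Bessel coefficient integrals satisfy ∫₀¹ t f(t) J_ν(q·j_{mν}·t;q²) d_q t = O(q^m) as m → ∞; that is, there exist C > 0 and M ∈ ℕ such that |∫₀¹ t f(t) J_ν(q·j_{mν}·t;q²) d_q t| ≤ C·q^m for all integers m ≥ M. -/

import Mathlib

/-!
Write `J_ν(z;q²) = c z^ν H(z²)` with `H` entire, and put `p = q²`, `a = q^{2ν}`, so that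
`0 < a p = q^{2ν+2} < 1`. The `p`-difference equation of `H` (`hahnH_rec`) says that, for a positive
zero `Z = z²` of `H`, the sequence `v n = H(p^n Z)` satisfies `v 0 = 0` and a discrete
Sturm–Liouville eigenvalue equation with eigenvalue `Z` (`Mode`).

By Cauchy–Schwarz the coefficient integral is controlled by the weighted norm
`∑ q^{2n} J_ν(q^{n+1} z)²`, a multiple of `z^{2ν} ∑ (a p)^n v(n+1)²`. Two estimates bound it by
`O(q^{2m})` at `z = j_m`.

* `mode_norm_le`: the norm is `O(z^{-2})`, uniformly over the zeros. While `p^n Z` is large, the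
  recurrence started from `v 0 = 0` forces `|v n|` to grow geometrically, so the sum is dominated by
  the indices where `p^n Z` is bounded, and there `H` is bounded.
* `eigenvalue_lower`: `j_m^{-2} = O(q^{2m})`. Eigensequences of distinct zeros are orthogonal. Some
  nonzero combination of the first `m` of them vanishes at the indices `0, …, m - 1`; its Rayleigh
  quotient is at most `j_m²`, while a weighted Hardy inequality (`hardy`) bounds it below by a
  constant times `p^{-m}`.
-/

open Filter

/-- The finite q-shifted factorial `(a;q)_n`. -/
noncomputable def qPoch (a q : ℝ) : ℕ → ℝ := fun n => ∏ j ∈ Finset.range n, (1 - a * q ^ j)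

/-- The infinite q-shifted factorial `(a;q)_∞`. -/
noncomputable def qPochInf (a q : ℝ) : ℝ := ∏' j : ℕ, (1 - a * q ^ j)

/-- The third Jackson (Hahn–Exton) q-Bessel function `J_ν(z;q²)` (base `q²`). -/
noncomputable def qBessel (ν q z : ℝ) : ℝ :=
  z ^ ν * (qPochInf (q ^ (2 * (ν + 1))) (q ^ 2) / qPochInf (q ^ 2) (q ^ 2)) *
    ∑' k : ℕ, ((-1 : ℝ) ^ k * q ^ (k * (k + 1)) * z ^ (2 * k) /
      (qPoch (q ^ (2 * (ν + 1))) (q ^ 2) k * qPoch (q ^ 2) (q ^ 2) k))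

/-- The Thomae–Jackson q-integral of `g` over `[0,1]`. -/
noncomputable def qInt (q : ℝ) (g : ℝ → ℝ) : ℝ := (1 - q) * ∑' n : ℕ, g (q ^ n) * q ^ n

/-! ### The entire function behind the q-Bessel function -/

/-- Coefficients of the entire function `hahnH`, as a product of consecutive ratios. -/
noncomputable def hahnCoeff (a p : ℝ) (k : ℕ) : ℝ :=
  ∏ i ∈ Finset.range k, (-(p ^ (i + 1)) / ((1 - a * p ^ (i + 1)) * (1 - p ^ (i + 1))))

/-- The entire function `H` with `J_ν(z;q²) = const · z^ν · H(z²)` for `a = q^{2ν}`, `p = q²`. -/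
noncomputable def hahnH (a p w : ℝ) : ℝ := ∑' k : ℕ, hahnCoeff a p k * w ^ k

/-- The majorant `∑ |c_k| w^k` of `hahnH`. -/
noncomputable def hahnMaj (a p w : ℝ) : ℝ := ∑' k : ℕ, |hahnCoeff a p k| * w ^ k

lemma one_sub_pow_pos {p : ℝ} (hp0 : 0 < p) (hp1 : p < 1) (i : ℕ) : 0 < 1 - p ^ (i + 1) := by
  have := pow_lt_one₀ hp0.le hp1 (n := i + 1) (Nat.succ_ne_zero i)
  linarith

lemma one_sub_mul_pow_pos {a p : ℝ} (ha : 0 < a) (hp0 : 0 < p) (hp1 : p < 1) (hap : a * p < 1)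
    (i : ℕ) : 0 < 1 - a * p ^ (i + 1) := by
  have h1 : p ^ i ≤ 1 := pow_le_one₀ hp0.le hp1.le
  have h2 : a * p ^ (i + 1) = a * p * p ^ i := by ring
  have h3 : a * p * p ^ i ≤ a * p * 1 := by gcongr
  linarith

lemma hahnCoeff_succ (a p : ℝ) (k : ℕ) : hahnCoeff a p (k + 1) =
    hahnCoeff a p k * (-(p ^ (k + 1)) / ((1 - a * p ^ (k + 1)) * (1 - p ^ (k + 1)))) :=
  Finset.prod_range_succ _ _

lemma hahnCoeff_ne_zero {a p : ℝ} (ha : 0 < a) (hp0 : 0 < p) (hp1 : p < 1) (hap : a * p < 1)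
    (k : ℕ) : hahnCoeff a p k ≠ 0 := by
  refine Finset.prod_ne_zero_iff.mpr fun i _ => ?_
  have h1 := one_sub_mul_pow_pos ha hp0 hp1 hap i
  have h2 := one_sub_pow_pos hp0 hp1 i
  have h3 := pow_pos hp0 (i + 1)
  exact div_ne_zero (neg_ne_zero.mpr h3.ne') (mul_pos h1 h2).ne'

lemma summable_hahnMaj {a p : ℝ} (ha : 0 < a) (hp0 : 0 < p) (hp1 : p < 1) (hap : a * p < 1)
    {w : ℝ} (hw : 0 ≤ w) : Summable fun k => |hahnCoeff a p k| * w ^ k := by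
  rcases hw.eq_or_lt with rfl | hw
  · refine summable_of_ne_finset_zero (s := {0}) fun k hk => ?_
    simp at hk
    simp [hk]
  have hlim : Tendsto (fun k : ℕ => p ^ (k + 1)) atTop (nhds 0) :=
    (tendsto_pow_atTop_nhds_zero_of_lt_one hp0.le hp1).comp (tendsto_add_atTop_nat 1)
  refine summable_of_ratio_test_tendsto_lt_one (l := 0) (by norm_num)
    (Eventually.of_forall fun k => ?_) ?_
  · exact mul_ne_zero (abs_ne_zero.mpr (hahnCoeff_ne_zero ha hp0 hp1 hap k)) (pow_pos hw k).ne'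
  · have h : Tendsto (fun k : ℕ => w * (p ^ (k + 1) / ((1 - a * p ^ (k + 1)) * (1 - p ^ (k + 1)))))
        atTop (nhds (w * (0 / ((1 - a * 0) * (1 - 0))))) := by
      refine Tendsto.const_mul _ (hlim.div ?_ (by norm_num))
      exact ((hlim.const_mul a).const_sub 1).mul (hlim.const_sub 1)
    simp only [zero_div, mul_zero] at h
    refine h.congr fun k => ?_
    have h1 := one_sub_mul_pow_pos ha hp0 hp1 hap k
    have h2 := one_sub_pow_pos hp0 hp1 k
    have h3 := pow_pos hp0 (k + 1)
    have h4 := abs_pos.mpr (hahnCoeff_ne_zero ha hp0 hp1 hap k)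
    have h5 := pow_pos hw k
    rw [hahnCoeff_succ, norm_mul, norm_mul, Real.norm_eq_abs, Real.norm_eq_abs, Real.norm_eq_abs,
      Real.norm_eq_abs, abs_abs, abs_abs, abs_mul, abs_div, abs_neg, abs_of_pos h3,
      abs_of_pos (mul_pos h1 h2), abs_of_pos h5, abs_of_pos (pow_pos hw (k + 1)), pow_succ w k]
    field_simp

lemma summable_hahnH {a p : ℝ} (ha : 0 < a) (hp0 : 0 < p) (hp1 : p < 1) (hap : a * p < 1)
    {w : ℝ} (hw : 0 ≤ w) : Summable fun k => hahnCoeff a p k * w ^ k := by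
  refine (summable_hahnMaj ha hp0 hp1 hap hw).of_norm_bounded fun k => ?_
  rw [norm_mul, Real.norm_eq_abs, Real.norm_of_nonneg (pow_nonneg hw k)]

lemma hahnMaj_nonneg {a p w : ℝ} (hw : 0 ≤ w) : 0 ≤ hahnMaj a p w :=
  tsum_nonneg fun k => mul_nonneg (abs_nonneg _) (pow_nonneg hw k)

/-- The second-order `p`-difference equation of `hahnH`. -/
lemma hahnH_rec {a p : ℝ} (ha : 0 < a) (hp0 : 0 < p) (hp1 : p < 1) (hap : a * p < 1)
    {w : ℝ} (hw : 0 ≤ w) :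
    hahnH a p w - (1 + a) * hahnH a p (p * w) + a * hahnH a p (p * (p * w)) =
      -(p * w) * hahnH a p (p * w) := by
  have hw1 : 0 ≤ p * w := by positivity
  have hw2 : 0 ≤ p * (p * w) := by positivity
  have s0 := (summable_hahnH ha hp0 hp1 hap hw).hasSum
  have s1 := (summable_hahnH ha hp0 hp1 hap hw1).hasSum
  have s2 := (summable_hahnH ha hp0 hp1 hap hw2).hasSum
  have hL := (s0.sub (s1.mul_left (1 + a))).add (s2.mul_left a)
  have hR := s1.mul_left (-(p * w))
  -- the constant terms cancel, and the coefficient at `k + 1` on the left is that of the right at `k`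
  have hL' := (hasSum_nat_add_iff' 1).mpr hL
  have hfun : (fun k => hahnCoeff a p (k + 1) * w ^ (k + 1) -
      (1 + a) * (hahnCoeff a p (k + 1) * (p * w) ^ (k + 1)) +
      a * (hahnCoeff a p (k + 1) * (p * (p * w)) ^ (k + 1))) =
      fun k => -(p * w) * (hahnCoeff a p k * (p * w) ^ k) := by
    funext k
    have h1 := (one_sub_mul_pow_pos ha hp0 hp1 hap k).ne'
    have h2 := (one_sub_pow_pos hp0 hp1 k).ne'
    have e : hahnCoeff a p (k + 1) * ((1 - a * p ^ (k + 1)) * (1 - p ^ (k + 1))) =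
        hahnCoeff a p k * -(p ^ (k + 1)) := by
      rw [hahnCoeff_succ, mul_assoc, div_mul_cancel₀ _ (mul_ne_zero h1 h2)]
    calc _ = hahnCoeff a p (k + 1) * ((1 - a * p ^ (k + 1)) * (1 - p ^ (k + 1))) * w ^ (k + 1) := by
          rw [mul_pow, mul_pow, mul_pow]; ring
      _ = _ := by rw [e, mul_pow]; ring
  rw [hfun] at hL'
  have := hL'.unique hR
  simp only [Finset.range_one, Finset.sum_singleton, pow_zero, mul_one] at this
  simp only [hahnH]
  linarith

lemma abs_hahnH_le {a p : ℝ} (ha : 0 < a) (hp0 : 0 < p) (hp1 : p < 1) (hap : a * p < 1)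
    {w t : ℝ} (hw : 0 ≤ w) (ht0 : 0 ≤ t) (ht1 : t ≤ 1) :
    |hahnH a p (t * w)| ≤ hahnMaj a p w := by
  rw [← Real.norm_eq_abs]
  refine tsum_of_norm_bounded (summable_hahnMaj ha hp0 hp1 hap hw).hasSum fun k => ?_
  rw [norm_mul, Real.norm_eq_abs, Real.norm_of_nonneg (by positivity)]
  gcongr
  exact mul_le_of_le_one_left hw ht1

lemma abs_hahnH_sub_le {a p : ℝ} (ha : 0 < a) (hp0 : 0 < p) (hp1 : p < 1) (hap : a * p < 1)
    {w t : ℝ} (hw : 0 ≤ w) (ht0 : 0 ≤ t) (ht1 : t ≤ 1) {r : ℝ} (hr0 : 0 ≤ r) (hr1 : r ≤ 1) :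
    |hahnH a p (t * w) - hahnH a p (r * (t * w))| ≤ hahnMaj a p w * t := by
  have s0 := (summable_hahnH ha hp0 hp1 hap (mul_nonneg ht0 hw))
  have s1 := (summable_hahnH ha hp0 hp1 hap (mul_nonneg hr0 (mul_nonneg ht0 hw)))
  rw [← Real.norm_eq_abs, hahnH, hahnH, ← s0.tsum_sub s1]
  refine tsum_of_norm_bounded ((summable_hahnMaj ha hp0 hp1 hap hw).hasSum.mul_right t) fun k => ?_
  cases k with
  | zero => simp; positivity
  | succ k =>
    have e : hahnCoeff a p (k + 1) * (t * w) ^ (k + 1) - hahnCoeff a p (k + 1) * (r * (t * w)) ^ (k + 1)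
      = hahnCoeff a p (k + 1) * w ^ (k + 1) * (t ^ (k + 1) * (1 - r ^ (k + 1))) := by
      rw [mul_pow, mul_pow, mul_pow]; ring
    have hr : r ^ (k + 1) ≤ 1 := pow_le_one₀ hr0 hr1
    have hr' : 0 ≤ r ^ (k + 1) := by positivity
    have ht : t ^ (k + 1) ≤ t := pow_le_of_le_one ht0 ht1 (Nat.succ_ne_zero k)
    rw [e, norm_mul, norm_mul, Real.norm_eq_abs, Real.norm_of_nonneg (by positivity : 0 ≤ w ^ (k + 1)),
      Real.norm_of_nonneg (mul_nonneg (by positivity) (by linarith))]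
    gcongr
    calc t ^ (k + 1) * (1 - r ^ (k + 1)) ≤ t ^ (k + 1) * 1 := by gcongr; linarith
      _ ≤ t := by simpa using ht

lemma hahnH_zero (a p : ℝ) : hahnH a p 0 = 1 := by
  rw [hahnH, tsum_eq_single 0]
  · simp [hahnCoeff]
  · intro k hk
    simp [hk]

/-- The term of the series in `qBessel` is the corresponding term of `hahnH`. -/
lemma qBessel_term (q ν : ℝ) (hq0 : 0 < q) (z : ℝ) (k : ℕ) :
    (-1 : ℝ) ^ k * q ^ (k * (k + 1)) * z ^ (2 * k) /
      (qPoch (q ^ (2 * (ν + 1))) (q ^ 2) k * qPoch (q ^ 2) (q ^ 2) k) =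
    hahnCoeff (q ^ (2 * ν)) (q ^ 2) k * (z ^ 2) ^ k := by
  have hexp : q ^ (2 * (ν + 1)) = q ^ (2 * ν) * q ^ 2 := by
    rw [mul_add, Real.rpow_add hq0]; norm_num
  rw [hexp]
  induction k with
  | zero => simp [qPoch, hahnCoeff]
  | succ k ih =>
    rw [hahnCoeff_succ, qPoch, qPoch, Finset.prod_range_succ, Finset.prod_range_succ]
    change _ / ((qPoch _ _ k * _) * (qPoch _ _ k * _)) = _
    have e1 : (-1 : ℝ) ^ (k + 1) * q ^ ((k + 1) * (k + 1 + 1)) * z ^ (2 * (k + 1)) =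
      ((-1 : ℝ) ^ k * q ^ (k * (k + 1)) * z ^ (2 * k)) * (-((q ^ 2) ^ (k + 1)) * z ^ 2) := by ring
    have e2 : ∀ A B C D : ℝ, (A * B) * (C * D) = (A * C) * (B * D) := by intros; ring
    rw [e1, e2 (qPoch _ _ k), mul_div_mul_comm, ih]
    have e3 : q ^ (2 * ν) * q ^ 2 * (q ^ 2) ^ k = q ^ (2 * ν) * (q ^ 2) ^ (k + 1) := by ring
    have e4 : q ^ 2 * (q ^ 2) ^ k = (q ^ 2) ^ (k + 1) := by ring
    rw [e3, e4]
    ring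

lemma qBessel_eq (q ν : ℝ) (hq0 : 0 < q) (z : ℝ) : qBessel ν q z =
    z ^ ν * (qPochInf (q ^ (2 * (ν + 1))) (q ^ 2) / qPochInf (q ^ 2) (q ^ 2)) *
      hahnH (q ^ (2 * ν)) (q ^ 2) (z ^ 2) := by
  rw [qBessel, hahnH]
  congr 1
  exact tsum_congr fun k => qBessel_term q ν hq0 z k

/-! ### Summation by parts, a Hardy inequality and min-max -/

/-- Bounded sequences whose consecutive differences decay like `p ^ n`. -/
def Tame (p : ℝ) (u : ℕ → ℝ) : Prop :=
  ∃ M : ℝ, 0 ≤ M ∧ (∀ n, |u n| ≤ M) ∧ ∀ n, |u n - u (n + 1)| ≤ M * p ^ n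

lemma Tame.sum {p : ℝ} {N : ℕ} {v : Fin N → ℕ → ℝ}
    (hv : ∀ i, Tame p (v i)) (c : Fin N → ℝ) : Tame p fun n => ∑ i, c i * v i n := by
  choose M hM0 hM hMd using hv
  refine ⟨∑ i, |c i| * M i, Finset.sum_nonneg fun i _ => mul_nonneg (abs_nonneg _) (hM0 i), ?_, ?_⟩
  · intro n
    refine (Finset.abs_sum_le_sum_abs _ _).trans (Finset.sum_le_sum fun i _ => ?_)
    rw [abs_mul]
    exact mul_le_mul_of_nonneg_left (hM i n) (abs_nonneg _)
  · intro n
    rw [← Finset.sum_sub_distrib, Finset.sum_mul]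
    refine (Finset.abs_sum_le_sum_abs _ _).trans (Finset.sum_le_sum fun i _ => ?_)
    rw [← mul_sub, abs_mul, mul_assoc]
    exact mul_le_mul_of_nonneg_left (hMd i n) (abs_nonneg _)

lemma Tame.summable_mul {p r : ℝ} {u w : ℕ → ℝ} (hu : Tame p u) (hw : Tame p w)
    (hr0 : 0 ≤ r) (hr1 : r < 1) : Summable fun n => r ^ n * (u (n + 1) * w (n + 1)) := by
  obtain ⟨M, hM0, hM, -⟩ := hu
  obtain ⟨M', hM0', hM', -⟩ := hw
  refine ((summable_geometric_of_lt_one hr0 hr1).mul_right (M * M')).of_norm_bounded fun n => ?_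
  rw [norm_mul, norm_mul, Real.norm_of_nonneg (pow_nonneg hr0 n)]
  have := hM (n + 1)
  have := hM' (n + 1)
  simp only [Real.norm_eq_abs]
  gcongr

lemma Tame.summable_energy {a p : ℝ} {u w : ℕ → ℝ} (ha : 0 < a) (hp0 : 0 < p) (hp1 : p < 1)
    (hap : a * p < 1) (hu : Tame p u) (hw : Tame p w) :
    Summable fun n => a ^ n * ((u n - u (n + 1)) * (w n - w (n + 1))) := by
  obtain ⟨M, hM0, -, hM⟩ := hu
  obtain ⟨M', hM0', -, hM'⟩ := hw
  refine ((summable_geometric_of_lt_one (by positivity) hap).mul_right (M * M')).of_norm_bounded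
    fun n => ?_
  rw [norm_mul, norm_mul, Real.norm_of_nonneg (pow_nonneg ha.le n)]
  have h1 := hM n
  have h2 := hM' n
  have h3 : p ^ n ≤ 1 := pow_le_one₀ hp0.le hp1.le
  simp only [Real.norm_eq_abs]
  calc a ^ n * (|u n - u (n + 1)| * |w n - w (n + 1)|)
      ≤ a ^ n * ((M * p ^ n) * (M' * p ^ n)) := by gcongr
    _ ≤ a ^ n * ((M * p ^ n) * (M' * 1)) := by gcongr
    _ = (a * p) ^ n * (M * M') := by rw [mul_pow]; ring

/-- Summation by parts: if `u` solves the Sturm–Liouville-type equation with right-hand side `g`,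
its energy form against `w` is the weighted pairing of `g` and `w`. -/
lemma energy_eq {a p : ℝ} {u w g : ℕ → ℝ} (ha : 0 < a) (hp0 : 0 < p) (hp1 : p < 1)
    (hap : a * p < 1) (hu : Tame p u) (hw : Tame p w) (hg : Tame p g) (hw0 : w 0 = 0)
    (hrec : ∀ n, a * (u (n + 1) - u (n + 2)) - (u n - u (n + 1)) = p ^ (n + 1) * g (n + 1)) :
    ∑' n, a ^ n * ((u n - u (n + 1)) * (w n - w (n + 1))) =
      p * ∑' n, (a * p) ^ n * (g (n + 1) * w (n + 1)) := by
  have s1 := (Tame.summable_energy ha hp0 hp1 hap hu hw).hasSum.tendsto_sum_nat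
  have s2 := ((Tame.summable_mul hg hw (by positivity) hap).hasSum.mul_left p).tendsto_sum_nat
  have key : ∀ N, ∑ n ∈ Finset.range N, p * ((a * p) ^ n * (g (n + 1) * w (n + 1))) =
      a ^ N * (u N - u (N + 1)) * w N +
        ∑ n ∈ Finset.range N, a ^ n * ((u n - u (n + 1)) * (w n - w (n + 1))) := by
    intro N
    induction N with
    | zero => simp [hw0]
    | succ N ih =>
      rw [Finset.sum_range_succ, Finset.sum_range_succ, ih]
      have := hrec N
      have e : p * ((a * p) ^ N * (g (N + 1) * w (N + 1))) =
        a ^ N * (p ^ (N + 1) * g (N + 1)) * w (N + 1) := by rw [mul_pow]; ring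
      rw [e, ← this]
      ring
  have hb : Tendsto (fun N => a ^ N * (u N - u (N + 1)) * w N) atTop (nhds 0) := by
    obtain ⟨M, hM0, -, hM⟩ := hu
    obtain ⟨M', hM0', hM', -⟩ := hw
    have hlim := (tendsto_pow_atTop_nhds_zero_of_lt_one (by positivity) hap).mul_const (M * M')
    rw [zero_mul] at hlim
    refine squeeze_zero_norm (fun N => ?_) hlim
    rw [norm_mul, norm_mul, Real.norm_of_nonneg (pow_nonneg ha.le N)]
    have h1 := hM N
    have h2 := hM' N
    simp only [Real.norm_eq_abs]
    calc a ^ N * |u N - u (N + 1)| * |w N| ≤ a ^ N * (M * p ^ N) * M' := by gcongr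
      _ = (a * p) ^ N * (M * M') := by rw [mul_pow]; ring
  have h := hb.add s1
  simp only [← key, zero_add] at h
  exact tendsto_nhds_unique h s2

/-- The constant of the discrete Hardy inequality `hardy`, written as a Cauchy product; it is
`1 / ((1 - p) (1 - a p))`. -/
noncomputable def hardyConst (a p : ℝ) : ℝ :=
  ∑' r : ℕ, ∑ s ∈ Finset.range (r + 1), p ^ s * (a * p) ^ (r - s)

lemma summable_hardy {a p : ℝ} (ha : 0 < a) (hp0 : 0 < p) (hp1 : p < 1) (hap : a * p < 1) :
    Summable fun r : ℕ => ∑ s ∈ Finset.range (r + 1), p ^ s * (a * p) ^ (r - s) := by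
  have h1 := (summable_geometric_of_lt_one hp0.le hp1)
  have h2 := (summable_geometric_of_lt_one (by positivity) hap)
  exact (summable_norm_sum_mul_range_of_summable_norm h1.norm h2.norm).of_norm

/-- A weighted discrete Hardy inequality for sequences vanishing on `{0, …, N}`. The factor `p ^ N`
is what yields the growth of the eigenvalues. -/
lemma hardy {a p : ℝ} {u : ℕ → ℝ} (ha : 0 < a) (hp0 : 0 < p) (hp1 : p < 1)
    (hap : a * p < 1) (hu : Tame p u) (N : ℕ) (hN : ∀ n ≤ N, u n = 0) :
    ∑' n, (a * p) ^ n * (u (n + 1) * u (n + 1)) ≤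
      hardyConst a p * p ^ N * ∑' n, a ^ n * ((u n - u (n + 1)) * (u n - u (n + 1))) := by
  set E := ∑' n, a ^ n * ((u n - u (n + 1)) * (u n - u (n + 1))) with hE
  have sE := Tame.summable_energy ha hp0 hp1 hap hu hu
  have s1 := Tame.summable_mul hu hu (by positivity) hap
  rw [← s1.sum_add_tsum_nat_add N, Finset.sum_eq_zero, zero_add]
  swap
  · intro n hn
    rw [hN (n + 1) (by simpa using hn)]; simp
  have hpt : ∀ r : ℕ, (a * p) ^ (r + N) * (u (r + N + 1) * u (r + N + 1)) ≤
      (∑ s ∈ Finset.range (r + 1), p ^ s * (a * p) ^ (r - s)) * (p ^ N * E) := by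
    intro r
    have hsum : u (r + N + 1) = -∑ s ∈ Finset.range (r + 1), (u (s + N) - u (s + N + 1)) := by
      have := Finset.sum_range_sub' (fun s => u (s + N)) (r + 1)
      have h0 : u (0 + N) = 0 := hN _ (by simp)
      simp only [h0, zero_sub] at this
      have e : ∀ s, s + 1 + N = s + N + 1 := by intro s; ring
      simp only [e] at this
      rw [this, neg_neg]
    have hcs : (∑ s ∈ Finset.range (r + 1), (u (s + N) - u (s + N + 1))) ^ 2 ≤
        (∑ s ∈ Finset.range (r + 1), (a ^ (s + N))⁻¹) *
        ∑ s ∈ Finset.range (r + 1),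
          a ^ (s + N) * ((u (s + N) - u (s + N + 1)) * (u (s + N) - u (s + N + 1))) := by
      refine Finset.sum_sq_le_sum_mul_sum_of_sq_le_mul _ (fun s _ => by positivity)
        (fun s _ => mul_nonneg (by positivity) (mul_self_nonneg _)) fun s _ => ?_
      have : a ^ (s + N) ≠ 0 := by positivity
      rw [inv_mul_cancel_left₀ this, sq]
    have hle : ∑ s ∈ Finset.range (r + 1),
          a ^ (s + N) * ((u (s + N) - u (s + N + 1)) * (u (s + N) - u (s + N + 1))) ≤ E := by
      have sE' := (summable_nat_add_iff N).mpr sE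
      refine (sE'.sum_le_tsum _ fun s _ => mul_nonneg (by positivity) (mul_self_nonneg _)).trans ?_
      rw [hE, ← sE.sum_add_tsum_nat_add N]
      refine le_add_of_nonneg_left (Finset.sum_nonneg fun s _ =>
        mul_nonneg (by positivity) (mul_self_nonneg _))
    have hw : (a * p) ^ (r + N) * ∑ s ∈ Finset.range (r + 1), (a ^ (s + N))⁻¹ =
        (∑ s ∈ Finset.range (r + 1), p ^ s * (a * p) ^ (r - s)) * p ^ N := by
      rw [Finset.mul_sum, Finset.sum_mul]
      refine Finset.sum_congr rfl fun s hs => ?_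
      obtain ⟨t, rfl⟩ := Nat.exists_eq_add_of_le (Nat.lt_succ_iff.mp (Finset.mem_range.mp hs))
      have : a ≠ 0 := ha.ne'
      rw [Nat.add_sub_cancel_left]
      field_simp
      ring
    calc (a * p) ^ (r + N) * (u (r + N + 1) * u (r + N + 1))
        = (a * p) ^ (r + N) * (∑ s ∈ Finset.range (r + 1), (u (s + N) - u (s + N + 1))) ^ 2 := by
          rw [hsum]; ring
      _ ≤ (a * p) ^ (r + N) * ((∑ s ∈ Finset.range (r + 1), (a ^ (s + N))⁻¹) * E) := by
          gcongr
          refine hcs.trans (mul_le_mul_of_nonneg_left hle ?_)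
          exact Finset.sum_nonneg fun s _ => by positivity
      _ = _ := by rw [← mul_assoc, hw, mul_assoc]
  have := ((summable_nat_add_iff N).mpr s1).tsum_le_tsum hpt
    ((summable_hardy ha hp0 hp1 hap).mul_right (p ^ N * E))
  rw [tsum_mul_right] at this
  rw [hardyConst, mul_assoc]
  exact this

/-- A nontrivial eigensequence, with eigenvalue `Z`, of a discrete Sturm–Liouville problem with
Dirichlet condition at `0`. The sequence `n ↦ H(p^n Z)` at a positive zero `Z` of `H` is one. -/
structure Mode (a p Z : ℝ) (v : ℕ → ℝ) : Prop where
  zero : v 0 = 0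
  tame : Tame p v
  eqn : ∀ n, a * (v (n + 1) - v (n + 2)) - (v n - v (n + 1)) = p ^ (n + 1) * (Z * v (n + 1))
  nontrivial : ∃ n, v (n + 1) ≠ 0

lemma Tame.const_mul {p : ℝ} {u : ℕ → ℝ} (hu : Tame p u) (c : ℝ) :
    Tame p fun n => c * u n := by
  simpa using Tame.sum (N := 1) (v := fun _ => u) (fun _ => hu) (fun _ => c)

lemma Mode.energy {a p Z : ℝ} {v w : ℕ → ℝ} (ha : 0 < a) (hp0 : 0 < p) (hp1 : p < 1)
    (hap : a * p < 1) (hv : Mode a p Z v) (hw : Tame p w) (hw0 : w 0 = 0) :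
    ∑' n, a ^ n * ((v n - v (n + 1)) * (w n - w (n + 1))) =
      p * (Z * ∑' n, (a * p) ^ n * (v (n + 1) * w (n + 1))) := by
  rw [energy_eq ha hp0 hp1 hap hv.tame hw (hv.tame.const_mul Z) hw0 hv.eqn]
  congr 1
  rw [← tsum_mul_left]
  exact tsum_congr fun n => by ring

lemma Mode.orthogonal {a p Z Z' : ℝ} {v w : ℕ → ℝ} (ha : 0 < a) (hp0 : 0 < p) (hp1 : p < 1)
    (hap : a * p < 1) (hv : Mode a p Z v) (hw : Mode a p Z' w) (hZ : Z ≠ Z') :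
    ∑' n, (a * p) ^ n * (v (n + 1) * w (n + 1)) = 0 := by
  have h1 := Mode.energy ha hp0 hp1 hap hv hw.tame hw.zero
  have h2 := Mode.energy ha hp0 hp1 hap hw hv.tame hv.zero
  have e1 : ∀ n, (w n - w (n + 1)) * (v n - v (n + 1)) = (v n - v (n + 1)) * (w n - w (n + 1)) :=
    fun n => mul_comm _ _
  have e2 : ∀ n, w (n + 1) * v (n + 1) = v (n + 1) * w (n + 1) := fun n => mul_comm _ _
  simp only [e1, e2] at h2
  rw [h1] at h2
  have h3 := mul_left_cancel₀ hp0.ne' h2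
  have h4 : (Z - Z') * ∑' n, (a * p) ^ n * (v (n + 1) * w (n + 1)) = 0 := by linarith
  exact (mul_eq_zero.mp h4).resolve_left (sub_ne_zero.mpr hZ)

lemma Mode.norm_pos {a p Z : ℝ} {v : ℕ → ℝ} (ha : 0 < a) (hp0 : 0 < p)
    (hap : a * p < 1) (hv : Mode a p Z v) : 0 < ∑' n, (a * p) ^ n * (v (n + 1) * v (n + 1)) := by
  obtain ⟨n, hn⟩ := hv.nontrivial
  refine (Tame.summable_mul hv.tame hv.tame (by positivity) hap).tsum_pos
    (fun n => mul_nonneg (by positivity) (mul_self_nonneg _)) n ?_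
  exact mul_pos (by positivity) (mul_self_pos.mpr hn)

/-- Min-max lower bound for eigenvalues: among `N + 1` eigensequences, some nonzero combination
vanishes at `0, …, N`; its Rayleigh quotient is at most the largest eigenvalue, and is bounded below
by the Hardy inequality. -/
lemma eigenvalue_lower {a p : ℝ} (ha : 0 < a) (hp0 : 0 < p) (hp1 : p < 1) (hap : a * p < 1)
    (N : ℕ) (Z : Fin (N + 1) → ℝ) (v : Fin (N + 1) → ℕ → ℝ) (hv : ∀ i, Mode a p (Z i) (v i))
    (hZ : Function.Injective Z) (B : ℝ) (hB : ∀ i, Z i ≤ B) :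
    1 ≤ hardyConst a p * p ^ (N + 1) * B := by
  -- `N + 1` unknowns against the `N` equations `u 1 = ⋯ = u N = 0`
  obtain ⟨c, hc, hc0⟩ : ∃ c : Fin (N + 1) → ℝ, (∀ n : Fin N, ∑ i, c i * v i (n + 1) = 0) ∧ c ≠ 0 := by
    let A : Matrix (Fin N) (Fin (N + 1)) ℝ := fun n i => v i (n + 1)
    have hlt : Module.finrank ℝ (Fin N → ℝ) < Module.finrank ℝ (Fin (N + 1) → ℝ) := by simp
    have := LinearMap.ker_ne_bot_of_finrank_lt (f := Matrix.toLin' A) hlt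
    obtain ⟨c, hcm, hc0⟩ := (Submodule.ne_bot_iff _).mp this
    refine ⟨c, fun n => ?_, hc0⟩
    have h := congrFun (LinearMap.mem_ker.mp hcm) n
    rw [Matrix.toLin'_apply] at h
    simpa [Matrix.mulVec, dotProduct, A, mul_comm] using h
  set u : ℕ → ℝ := fun n => ∑ i, c i * v i n with hu
  set g : ℕ → ℝ := fun n => ∑ i, (c i * Z i) * v i n with hg
  have htu : Tame p u := Tame.sum (fun i => (hv i).tame) c
  have htg : Tame p g := Tame.sum (fun i => (hv i).tame) _
  have hu0 : u 0 = 0 := by simp [hu, (hv _).zero]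
  have huN : ∀ n ≤ N, u n = 0 := by
    intro n hn
    cases n with
    | zero => exact hu0
    | succ n => exact hc ⟨n, hn⟩
  have hrec : ∀ n, a * (u (n + 1) - u (n + 2)) - (u n - u (n + 1)) = p ^ (n + 1) * g (n + 1) := by
    intro n
    simp only [hu, hg, ← Finset.sum_sub_distrib, Finset.mul_sum]
    refine Finset.sum_congr rfl fun i _ => ?_
    linear_combination c i * (hv i).eqn n
  have hE := energy_eq ha hp0 hp1 hap htu htu htg hu0 hrec
  have hH := hardy ha hp0 hp1 hap htu N huN
  set I : Fin (N + 1) → ℝ := fun i => ∑' n, (a * p) ^ n * (v i (n + 1) * v i (n + 1)) with hI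
  have hIpos : ∀ i, 0 < I i := fun i => (hv i).norm_pos ha hp0 hap
  -- expansion of the weighted pairing by orthogonality
  have hexp : ∀ b : Fin (N + 1) → ℝ,
      ∑' n, (a * p) ^ n * ((∑ i, b i * v i (n + 1)) * ∑ i, c i * v i (n + 1)) =
        ∑ i, b i * c i * I i := by
    intro b
    have hs : HasSum (fun n => ∑ i, ∑ k, b i * c k * ((a * p) ^ n * (v i (n + 1) * v k (n + 1))))
        (∑ i, ∑ k, b i * c k * ∑' n, (a * p) ^ n * (v i (n + 1) * v k (n + 1))) :=
      hasSum_sum fun i _ => hasSum_sum fun k _ =>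
        (Tame.summable_mul (hv i).tame (hv k).tame (by positivity) hap).hasSum.mul_left _
    have e : (fun n => (a * p) ^ n * ((∑ i, b i * v i (n + 1)) * ∑ i, c i * v i (n + 1))) =
        fun n => ∑ i, ∑ k, b i * c k * ((a * p) ^ n * (v i (n + 1) * v k (n + 1))) := by
      funext n
      rw [Finset.sum_mul_sum, Finset.mul_sum]
      refine Finset.sum_congr rfl fun i _ => ?_
      rw [Finset.mul_sum]
      exact Finset.sum_congr rfl fun k _ => by ring
    rw [e, hs.tsum_eq]
    refine Finset.sum_congr rfl fun i _ => ?_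
    rw [Finset.sum_eq_single i]
    · intro k _ hk
      rw [Mode.orthogonal ha hp0 hp1 hap (hv i) (hv k) (hZ.ne hk.symm), mul_zero]
    · simp
  have hnorm := hexp c
  have hgu := hexp fun i => c i * Z i
  have hpos : 0 < ∑ i, c i * c i * I i := by
    obtain ⟨i, hi⟩ := Function.ne_iff.mp hc0
    refine Finset.sum_pos' (fun k _ => mul_nonneg (mul_self_nonneg _) (hIpos k).le)
      ⟨i, Finset.mem_univ _, mul_pos (mul_self_pos.mpr hi) (hIpos i)⟩
  have hle : ∑ i, c i * Z i * c i * I i ≤ B * ∑ i, c i * c i * I i := by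
    rw [Finset.mul_sum]
    refine Finset.sum_le_sum fun i _ => ?_
    have := mul_le_mul_of_nonneg_right (hB i) (mul_nonneg (mul_self_nonneg (c i)) (hIpos i).le)
    linarith
  have hG : 0 ≤ hardyConst a p := tsum_nonneg fun r => Finset.sum_nonneg fun s _ => by positivity
  change ∑' n, (a * p) ^ n * (u (n + 1) * u (n + 1)) = _ at hnorm
  change ∑' n, (a * p) ^ n * (g (n + 1) * u (n + 1)) = _ at hgu
  rw [hE, hnorm, hgu] at hH
  have h1 : ∑ i, c i * c i * I i ≤ hardyConst a p * p ^ N * (p * (B * ∑ i, c i * c i * I i)) :=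
    hH.trans (by gcongr)
  have h2 : 1 * ∑ i, c i * c i * I i ≤ (hardyConst a p * p ^ (N + 1) * B) * ∑ i, c i * c i * I i := by
    rw [pow_succ]; linarith
  exact le_of_mul_le_mul_right h2 hpos

/-! ### The eigensequences attached to zeros -/

lemma mode_of_zero {a p : ℝ} (ha : 0 < a) (hp0 : 0 < p) (hp1 : p < 1) (hap : a * p < 1)
    {Z : ℝ} (hZ : 0 < Z) (h : hahnH a p Z = 0) : Mode a p Z fun n => hahnH a p (p ^ n * Z) := by
  have hpn : ∀ n, p ^ n ≤ 1 := fun n => pow_le_one₀ hp0.le hp1.le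
  have e : ∀ n, p ^ (n + 1) * Z = p * (p ^ n * Z) := fun n => by ring
  refine ⟨by simpa using h, ⟨hahnMaj a p Z, hahnMaj_nonneg hZ.le, fun n => ?_, fun n => ?_⟩,
    fun n => ?_, ?_⟩
  · exact abs_hahnH_le ha hp0 hp1 hap hZ.le (by positivity) (hpn n)
  · beta_reduce
    rw [e]
    exact abs_hahnH_sub_le ha hp0 hp1 hap hZ.le (by positivity) (hpn n) hp0.le hp1.le
  · have hr := hahnH_rec ha hp0 hp1 hap (w := p ^ n * Z) (by positivity)
    rw [e (n + 1), e n]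
    linear_combination -hr
  · -- `H (p ^ n * Z)` tends to `H 0 = 1`
    by_contra! hcon
    have hb : ∀ n, 1 ≤ hahnMaj a p Z * p ^ (n + 1) := by
      intro n
      have := abs_hahnH_sub_le ha hp0 hp1 hap hZ.le (by positivity) (hpn (n + 1)) le_rfl zero_le_one
      rwa [hcon n, zero_mul, hahnH_zero, zero_sub, abs_neg, abs_one] at this
    have hlim := (((tendsto_pow_atTop_nhds_zero_of_lt_one hp0.le hp1).comp
      (tendsto_add_atTop_nat 1)).const_mul (hahnMaj a p Z))
    have := ge_of_tendsto' hlim hb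
    norm_num at this

/-- Weighted `ℓ²` bound for the eigensequences. As long as `p ^ n * Z` is large, the recurrence
started from `v 0 = 0` forces geometric growth, so the sum is dominated by the indices where
`p ^ n * Z` stays bounded, and there `H` is bounded. -/
lemma mode_norm_le {a p s : ℝ} (ha : 0 < a) (hp0 : 0 < p) (hp1 : p < 1) (hap : a * p < 1)
    (hs : 0 < s) (hps : p ^ s = a * p) : ∃ C : ℝ, 0 ≤ C ∧ ∀ Z, 0 < Z → hahnH a p Z = 0 →
      ∑' n, (a * p) ^ n * (hahnH a p (p ^ (n + 1) * Z) * hahnH a p (p ^ (n + 1) * Z)) ≤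
        C * Z ^ (-s) := by
  -- `L` is large enough that `L * |v (n+1)| ≤ a * |v (n+2)|` doubles the weighted squares
  set L : ℝ := a + 2 / p with hL
  have hL0 : 0 < L := by positivity
  have hLa : a ≤ L := le_add_of_nonneg_right (by positivity)
  have hL2 : 2 * a ≤ L ^ 2 * p := by
    have : L ^ 2 * p = a ^ 2 * p + 4 * a + 4 / p := by rw [hL]; field_simp; ring
    rw [this]
    have : 0 < a ^ 2 * p + 4 / p := by positivity
    linarith
  set K : ℝ := 2 + a + L with hK
  have hK0 : 0 < K := by positivity
  set B := hahnMaj a p K with hB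
  have hB0 : 0 ≤ B := hahnMaj_nonneg hK0.le
  have hap0 : 0 < a * p := by positivity
  have hap1 : 0 < 1 - a * p := by linarith
  refine ⟨B ^ 2 * (1 + (1 - a * p)⁻¹) * (K / p) ^ s, by positivity, fun Z hZ hzero => ?_⟩
  have hmode := mode_of_zero ha hp0 hp1 hap hZ hzero
  set v : ℕ → ℝ := fun n => hahnH a p (p ^ n * Z) with hv
  have hex : ∃ n : ℕ, p ^ (n + 1) * Z < K := by
    have hlim := (((tendsto_pow_atTop_nhds_zero_of_lt_one hp0.le hp1).comp
      (tendsto_add_atTop_nat 1)).mul_const Z)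
    rw [zero_mul] at hlim
    exact (hlim.eventually (gt_mem_nhds hK0)).exists
  classical
  obtain ⟨n0, hn0, hmin⟩ : ∃ n0, p ^ (n0 + 1) * Z < K ∧ ∀ n < n0, K ≤ p ^ (n + 1) * Z :=
    ⟨Nat.find hex, Nat.find_spec hex, fun n hn => not_lt.mp (Nat.find_min hex hn)⟩
  have hgrow : ∀ n < n0, |v n| ≤ |v (n + 1)| → L * |v (n + 1)| ≤ a * |v (n + 2)| := by
    intro n hn hle
    have h1 := hmin n hn
    have h2 := hmode.eqn n
    have h3 : (p ^ (n + 1) * Z - 1 - a) * v (n + 1) = -(a * v (n + 2)) - v n := by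
      linear_combination -h2
    have h4 : (p ^ (n + 1) * Z - 1 - a) * |v (n + 1)| ≤ a * |v (n + 2)| + |v n| := by
      have h5 : 0 < p ^ (n + 1) * Z - 1 - a := by linarith
      rw [← abs_of_pos h5, ← abs_mul, h3, ← abs_of_pos ha, ← abs_mul]
      refine (abs_sub _ _).trans ?_
      rw [abs_neg, abs_of_pos ha]
    have h6 : (L + 1) * |v (n + 1)| ≤ (p ^ (n + 1) * Z - 1 - a) * |v (n + 1)| := by
      gcongr
      linarith
    linarith
  have hmono : ∀ n ≤ n0, |v n| ≤ |v (n + 1)| := by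
    intro n
    induction n with
    | zero => intro _; rw [hmode.zero, abs_zero]; exact abs_nonneg _
    | succ n ih =>
      intro hn
      have h1 := hgrow n (by omega) (ih (by omega))
      have h2 : a * |v (n + 1)| ≤ L * |v (n + 1)| := by gcongr
      exact le_of_mul_le_mul_left (h2.trans h1) ha
  set T : ℕ → ℝ := fun n => (a * p) ^ n * (v (n + 1) * v (n + 1)) with hT
  have hT0 : ∀ n, 0 ≤ T n := fun n => mul_nonneg (by positivity) (mul_self_nonneg _)
  have hdouble : ∀ n < n0, 2 * T n ≤ T (n + 1) := by
    intro n hn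
    have h1 := hgrow n hn (hmono n hn.le)
    have h2 : (L * |v (n + 1)|) ^ 2 ≤ (a * |v (n + 2)|) ^ 2 := by gcongr
    rw [mul_pow, mul_pow, sq_abs, sq_abs] at h2
    have h3 : (2 * a) * v (n + 1) ^ 2 ≤ (L ^ 2 * p) * v (n + 1) ^ 2 := by gcongr
    have h4 : a * (2 * v (n + 1) ^ 2) ≤ a * (a * p * v (n + 2) ^ 2) := by nlinarith
    have h5 := le_of_mul_le_mul_left h4 ha
    calc 2 * T n = (a * p) ^ n * (2 * v (n + 1) ^ 2) := by simp only [hT]; ring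
      _ ≤ (a * p) ^ n * (a * p * v (n + 2) ^ 2) := by gcongr
      _ = T (n + 1) := by simp only [hT]; ring
  have hhead : ∀ k ≤ n0, ∑ n ∈ Finset.range k, T n ≤ T k := by
    intro k
    induction k with
    | zero => intro _; simpa using hT0 0
    | succ k ih =>
      intro hk
      rw [Finset.sum_range_succ]
      have := ih (by omega)
      have := hdouble k (by omega)
      linarith
  have htail : ∀ n, T (n + n0) ≤ (a * p) ^ n * ((a * p) ^ n0 * B ^ 2) := by
    intro n
    have hy : p ^ (n + n0 + 1) * Z ≤ K := by
      have : p ^ n ≤ 1 := pow_le_one₀ hp0.le hp1.le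
      calc p ^ (n + n0 + 1) * Z = p ^ n * (p ^ (n0 + 1) * Z) := by ring
        _ ≤ 1 * (p ^ (n0 + 1) * Z) := by gcongr
        _ ≤ K := by linarith
    have hvB : |v (n + n0 + 1)| ≤ B := by
      have := abs_hahnH_le ha hp0 hp1 hap hK0.le (t := p ^ (n + n0 + 1) * Z / K) (by positivity)
        ((div_le_one hK0).mpr hy)
      rwa [div_mul_cancel₀ _ hK0.ne'] at this
    calc T (n + n0) = (a * p) ^ n * ((a * p) ^ n0 * |v (n + n0 + 1)| ^ 2) := by
          simp only [hT]; rw [sq_abs]; ring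
      _ ≤ _ := by gcongr
  have sT : Summable T := Tame.summable_mul hmode.tame hmode.tame (by positivity) hap
  have htail' : ∑' n, T (n + n0) ≤ (1 - a * p)⁻¹ * ((a * p) ^ n0 * B ^ 2) := by
    have := ((summable_nat_add_iff n0).mpr sT).tsum_le_tsum htail
      ((summable_geometric_of_lt_one (by positivity) hap).mul_right _)
    rwa [tsum_mul_right, tsum_geometric_of_lt_one (by positivity) hap] at this
  have hT1 : T n0 ≤ (a * p) ^ n0 * B ^ 2 := by simpa using htail 0
  have hpow : (a * p) ^ n0 ≤ (K / p) ^ s * Z ^ (-s) := by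
    have h1 : p ^ n0 ≤ K / p * Z⁻¹ := by
      rw [← div_eq_mul_inv, div_div, le_div_iff₀ (by positivity)]
      calc p ^ n0 * (p * Z) = p ^ (n0 + 1) * Z := by ring
        _ ≤ K := hn0.le
    rw [← hps, ← Real.rpow_natCast, ← Real.rpow_mul hp0.le, mul_comm, Real.rpow_mul hp0.le,
      Real.rpow_natCast, Real.rpow_neg hZ.le, ← Real.inv_rpow hZ.le,
      ← Real.mul_rpow (by positivity) (by positivity)]
    gcongr
  change ∑' n, T n ≤ _
  rw [← sT.sum_add_tsum_nat_add n0]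
  calc _ ≤ (a * p) ^ n0 * B ^ 2 + (1 - a * p)⁻¹ * ((a * p) ^ n0 * B ^ 2) :=
        add_le_add ((hhead n0 le_rfl).trans hT1) htail'
    _ = B ^ 2 * (1 + (1 - a * p)⁻¹) * (a * p) ^ n0 := by ring
    _ ≤ B ^ 2 * (1 + (1 - a * p)⁻¹) * ((K / p) ^ s * Z ^ (-s)) := by gcongr
    _ = _ := by ring

/-! ### Zeros of the q-Bessel function and the coefficient bound -/

theorem stmt14 (q ν : ℝ) (hq0 : 0 < q) (hq1 : q < 1) (hν : -1 < ν)
    (j : ℕ → ℝ)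
    (hjpos : ∀ k, 1 ≤ k → 0 < j k)
    (hjzero : ∀ k, 1 ≤ k → qBessel ν q (j k) = 0)
    (hjmono : ∀ k, 1 ≤ k → j k < j (k + 1))
    (hjall : ∀ x, 0 < x → qBessel ν q x = 0 → ∃ k, 1 ≤ k ∧ x = j k)
    (f : ℝ → ℝ)
    (hf : Summable fun n : ℕ => q ^ n * q ^ n * |f (q ^ n)| ^ 2) :
    ∃ C : ℝ, 0 < C ∧ ∃ M : ℕ, ∀ m, M ≤ m →
      |qInt q (fun t => t * f t * qBessel ν q (q * j m * t))| ≤ C * q ^ m := by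
  set c := qPochInf (q ^ (2 * (ν + 1))) (q ^ 2) / qPochInf (q ^ 2) (q ^ 2) with hc
  set a : ℝ := q ^ (2 * ν) with hadef
  set p : ℝ := q ^ 2 with hpdef
  have hJ : ∀ z, qBessel ν q z = z ^ ν * c * hahnH a p (z ^ 2) := fun z => qBessel_eq q ν hq0 z
  -- the argument needs no information on the normalising constant: if it vanished, so would `J`
  by_cases hc0 : c = 0
  · refine ⟨1, one_pos, 0, fun m _ => ?_⟩
    simp only [qInt, hJ, hc0, mul_zero, zero_mul, tsum_zero, abs_zero]
    positivity
  have ha : 0 < a := Real.rpow_pos_of_pos hq0 _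
  have hp0 : 0 < p := by positivity
  have hp1 : p < 1 := pow_lt_one₀ hq0.le hq1 two_ne_zero
  have hps : p ^ (ν + 1) = a * p := by
    rw [hpdef, hadef, ← Real.rpow_natCast, ← Real.rpow_mul hq0.le, ← Real.rpow_add hq0]
    congr 1
    push_cast
    ring
  have hap : a * p < 1 := by
    rw [← hps]
    exact Real.rpow_lt_one hp0.le hp1 (by linarith)
  have hH : ∀ k, 1 ≤ k → hahnH a p (j k ^ 2) = 0 := by
    intro k hk
    have h := hjzero k hk
    rw [hJ] at h
    exact (mul_eq_zero.mp h).resolve_left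
      (mul_ne_zero (Real.rpow_pos_of_pos (hjpos k hk) _).ne' hc0)
  have hmono : StrictMono fun i : ℕ => j (i + 1) :=
    strictMono_nat_of_lt_succ fun n => hjmono (n + 1) (by omega)
  have hlow : ∀ m, 1 ≤ m → 1 ≤ hardyConst a p * p ^ m * j m ^ 2 := by
    intro m hm
    obtain ⟨N, rfl⟩ : ∃ N, m = N + 1 := ⟨m - 1, by omega⟩
    refine eigenvalue_lower ha hp0 hp1 hap N (fun i => j (i + 1) ^ 2) _
      (fun i => mode_of_zero ha hp0 hp1 hap (pow_pos (hjpos _ (by omega)) 2) (hH _ (by omega)))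
      (fun i k hik => ?_) _ (fun i => ?_)
    · have h := (pow_left_inj₀ (hjpos _ (by omega)).le (hjpos _ (by omega)).le two_ne_zero).mp hik
      exact Fin.ext (hmono.injective h)
    · have h := hmono.monotone (Nat.lt_succ_iff.mp i.isLt)
      have h0 := hjpos (i + 1) (by omega)
      exact pow_le_pow_left₀ h0.le h 2
  obtain ⟨C, hC0, hC⟩ := mode_norm_le ha hp0 hp1 hap (by linarith : 0 < ν + 1) hps
  have hG0 : 0 ≤ hardyConst a p := tsum_nonneg fun r => Finset.sum_nonneg fun s _ => by positivity
  set F := ∑' n : ℕ, q ^ n * q ^ n * |f (q ^ n)| ^ 2 with hF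
  have hF0 : 0 ≤ F := tsum_nonneg fun n => by positivity
  set D := c ^ 2 * a * C * hardyConst a p with hD
  have hD0 : 0 ≤ D := by positivity
  refine ⟨F + D + 1, by positivity, 1, fun m hm => ?_⟩
  have hz := hjpos m hm
  set z := j m with hzdef
  set v : ℕ → ℝ := fun n => hahnH a p (p ^ n * z ^ 2) with hv
  set G : ℕ → ℝ := fun n => q ^ n * qBessel ν q (q * z * q ^ n) with hG
  have hGsq : ∀ n, G n ^ 2 = c ^ 2 * a * (z ^ ν) ^ 2 * ((a * p) ^ n * (v (n + 1) * v (n + 1))) := by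
    intro n
    have e1 : (q * z * q ^ n) ^ 2 = p ^ (n + 1) * z ^ 2 := by rw [hpdef]; ring
    have e2 : (q * z * q ^ n) ^ ν = q ^ ν * z ^ ν * (q ^ ν) ^ n := by
      rw [Real.mul_rpow (by positivity) (by positivity), Real.mul_rpow hq0.le hz.le,
        ← Real.rpow_natCast, ← Real.rpow_natCast, ← Real.rpow_mul hq0.le, ← Real.rpow_mul hq0.le,
        mul_comm ν]
    have e3 : a = (q ^ ν) ^ 2 := by
      rw [hadef, ← Real.rpow_natCast, ← Real.rpow_mul hq0.le, mul_comm]; norm_num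
    simp only [hG, hv, hJ]
    rw [e1, e2, e3, hpdef]
    ring
  have sV : Summable fun n => (a * p) ^ n * (v (n + 1) * v (n + 1)) := by
    have hm' := mode_of_zero ha hp0 hp1 hap (pow_pos hz 2) (hH m hm)
    exact Tame.summable_mul hm'.tame hm'.tame (by positivity) hap
  have sG : Summable fun n => G n ^ 2 := by
    simp only [hGsq]
    exact sV.mul_left _
  have hGle : ∑' n, G n ^ 2 ≤ D * p ^ m := by
    simp only [hGsq]
    rw [tsum_mul_left]
    have h1 := hC (z ^ 2) (pow_pos hz 2) (hH m hm)
    have h2 : (z ^ ν) ^ 2 * (z ^ 2) ^ (-(ν + 1)) * z ^ 2 = 1 := by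
      rw [← Real.rpow_natCast (z ^ ν), ← Real.rpow_natCast z, ← Real.rpow_mul hz.le,
        ← Real.rpow_mul hz.le, ← Real.rpow_add hz, ← Real.rpow_add hz]
      convert Real.rpow_zero z using 2
      push_cast
      ring
    have h3 : (z ^ ν) ^ 2 * (z ^ 2) ^ (-(ν + 1)) ≤ hardyConst a p * p ^ m := by
      have h4 := mul_le_mul_of_nonneg_left (hlow m hm)
        (by positivity : 0 ≤ (z ^ ν) ^ 2 * (z ^ 2) ^ (-(ν + 1)))
      calc _ = (z ^ ν) ^ 2 * (z ^ 2) ^ (-(ν + 1)) * 1 := by ring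
        _ ≤ _ := h4
        _ = hardyConst a p * p ^ m * ((z ^ ν) ^ 2 * (z ^ 2) ^ (-(ν + 1)) * z ^ 2) := by ring
        _ = _ := by rw [h2, mul_one]
    calc _ ≤ c ^ 2 * a * (z ^ ν) ^ 2 * (C * (z ^ 2) ^ (-(ν + 1))) := by gcongr
      _ = c ^ 2 * a * C * ((z ^ ν) ^ 2 * (z ^ 2) ^ (-(ν + 1))) := by ring
      _ ≤ c ^ 2 * a * C * (hardyConst a p * p ^ m) := by gcongr
      _ = D * p ^ m := by rw [hD]; ring
  have hqm : 0 < q ^ m := pow_pos hq0 m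
  -- Cauchy–Schwarz in the form `|x y| ≤ q^m x² + q^{-m} y²`
  have hterm : ∀ n, ‖q ^ n * f (q ^ n) * qBessel ν q (q * z * q ^ n) * q ^ n‖ ≤
      q ^ m * (q ^ n * q ^ n * |f (q ^ n)| ^ 2) + (q ^ m)⁻¹ * G n ^ 2 := by
    intro n
    have e : q ^ n * f (q ^ n) * qBessel ν q (q * z * q ^ n) * q ^ n = (q ^ n * f (q ^ n)) * G n := by
      simp only [hG]; ring
    rw [e, Real.norm_eq_abs, abs_mul, sq_abs, ← sq_abs (G n)]
    have e' : q ^ n * q ^ n * f (q ^ n) ^ 2 = |q ^ n * f (q ^ n)| ^ 2 := by rw [sq_abs]; ring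
    rw [e']
    set x := |q ^ n * f (q ^ n)|
    set y := |G n|
    have hx : 0 ≤ x := abs_nonneg _
    have hy : 0 ≤ y := abs_nonneg _
    have h5 : q ^ m * x ^ 2 + (q ^ m)⁻¹ * y ^ 2 - x * y =
        (q ^ m)⁻¹ * ((q ^ m * x - y) ^ 2 + q ^ m * x * y) := by
      field_simp
      ring
    have h6 : 0 ≤ (q ^ m)⁻¹ * ((q ^ m * x - y) ^ 2 + q ^ m * x * y) := by positivity
    linarith
  have hbound := tsum_of_norm_bounded ((hf.hasSum.mul_left (q ^ m)).add
    (sG.hasSum.mul_left (q ^ m)⁻¹)) hterm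
  rw [qInt, abs_mul, abs_of_pos (by linarith : 0 < 1 - q), ← Real.norm_eq_abs]
  have h7 : (q ^ m)⁻¹ * ∑' n, G n ^ 2 ≤ D * q ^ m := by
    rw [inv_mul_le_iff₀ hqm]
    refine hGle.trans_eq ?_
    rw [hpdef]; ring
  calc _ ≤ 1 * (q ^ m * F + (q ^ m)⁻¹ * ∑' n, G n ^ 2) := by
        refine mul_le_mul (by linarith) hbound (norm_nonneg _) zero_le_one
    _ ≤ 1 * (q ^ m * F + D * q ^ m) := by gcongr
    _ ≤ (F + D + 1) * q ^ m := by nlinarith
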